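/- Under Independence, Relevance, Monotonicity, and the Double exclusion restriction, the first stage for D2 satisfies ΔE[D2|Z] = μ({C1,C2}). (Lemma 2.2) -/

import Mathlib

open MeasureTheory ProbabilityTheory

noncomputable section

variable {Ω : Type*} [MeasurableSpace Ω]

/-- Observed first-part treatment: `D1 = D1(1)·Z + D1(0)·(1−Z)`. -/
def obsD1 (Z : Ω → ℝ) (D1 : Bool → Ω → ℝ) (ω : Ω) : ℝ :=
  D1 true ω * Z ω + D1 false ω * (1 - Z ω)

/-- Observed second-part treatment. -/
def obsD2 (Z : Ω → ℝ) (D1 : Bool → Ω → ℝ) (D2 : Bool → Bool → Ω → ℝ) (ω : Ω) : ℝ :=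
  (D2 true true ω * obsD1 Z D1 ω + D2 true false ω * (1 - obsD1 Z D1 ω)) * Z ω +
  (D2 false true ω * obsD1 Z D1 ω + D2 false false ω * (1 - obsD1 Z D1 ω)) * (1 - Z ω)

/-- Summary treatment `D∧ = D1·D2`. -/
def obsDand (Z : Ω → ℝ) (D1 : Bool → Ω → ℝ) (D2 : Bool → Bool → Ω → ℝ) (ω : Ω) : ℝ :=
  obsD1 Z D1 ω * obsD2 Z D1 D2 ω

/-- Summary treatment `D∨ = D1 + D2 − D1·D2`. -/
def obsDor (Z : Ω → ℝ) (D1 : Bool → Ω → ℝ) (D2 : Bool → Bool → Ω → ℝ) (ω : Ω) : ℝ :=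
  obsD1 Z D1 ω + obsD2 Z D1 D2 ω - obsD1 Z D1 ω * obsD2 Z D1 D2 ω

/-- Observed outcome `Y = Σ_{d1,d2} Y(Z,d1,d2)·1{D1=d1, D2=d2}`, written out using that the
observed treatments and the instrument are {0,1}-valued. The first index of `Yp` is `z`, the
second is `d1`, the third is `d2`. -/
def obsY (Z : Ω → ℝ) (D1 : Bool → Ω → ℝ) (D2 : Bool → Bool → Ω → ℝ)
    (Yp : Bool → Bool → Bool → Ω → ℝ) (ω : Ω) : ℝ :=
  (Yp true true true ω * obsD1 Z D1 ω * obsD2 Z D1 D2 ω +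
   Yp true false true ω * (1 - obsD1 Z D1 ω) * obsD2 Z D1 D2 ω +
   Yp true true false ω * obsD1 Z D1 ω * (1 - obsD2 Z D1 D2 ω) +
   Yp true false false ω * (1 - obsD1 Z D1 ω) * (1 - obsD2 Z D1 D2 ω)) * Z ω +
  (Yp false true true ω * obsD1 Z D1 ω * obsD2 Z D1 D2 ω +
   Yp false false true ω * (1 - obsD1 Z D1 ω) * obsD2 Z D1 D2 ω +
   Yp false true false ω * obsD1 Z D1 ω * (1 - obsD2 Z D1 D2 ω) +
   Yp false false false ω * (1 - obsD1 Z D1 ω) * (1 - obsD2 Z D1 D2 ω)) * (1 - Z ω)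

/-- `ΔE[A|Z] := E[A | Z = 1] − E[A | Z = 0]`, expectations under conditional measures. -/
def dE (μ : Measure Ω) (Z A : Ω → ℝ) : ℝ :=
  (∫ ω, A ω ∂(μ[|Z ⁻¹' {1}])) - (∫ ω, A ω ∂(μ[|Z ⁻¹' {0}]))

/-- The full-complier event `{C1,C2}`. -/
def CCev (D1 : Bool → Ω → ℝ) (D2 : Bool → Bool → Ω → ℝ) : Set Ω :=
  {ω | D1 true ω - D1 false ω = 1 ∧ D2 true true ω - D2 false false ω = 1}

/-- The mover event `{C1,N2}`. -/
def CNev (D1 : Bool → Ω → ℝ) (D2 : Bool → Bool → Ω → ℝ) : Set Ω :=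
  {ω | D1 true ω - D1 false ω = 1 ∧ D2 true true ω = 0 ∧ D2 false false ω = 0}

/-- The mover event `{C1,A2}`. -/
def CAev (D1 : Bool → Ω → ℝ) (D2 : Bool → Bool → Ω → ℝ) : Set Ω :=
  {ω | D1 true ω - D1 false ω = 1 ∧ D2 true true ω = 1 ∧ D2 false false ω = 1}

/-- The mover event `{N1,C2}`. -/
def NCev (D1 : Bool → Ω → ℝ) (D2 : Bool → Bool → Ω → ℝ) : Set Ω :=
  {ω | D1 true ω = 0 ∧ D1 false ω = 0 ∧ D2 true false ω - D2 false false ω = 1}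

/-- The mover event `{A1,C2}`. -/
def ACev (D1 : Bool → Ω → ℝ) (D2 : Bool → Bool → Ω → ℝ) : Set Ω :=
  {ω | D1 true ω = 1 ∧ D1 false ω = 1 ∧ D2 true true ω - D2 false true ω = 1}

theorem integral_cond_of_indep {Ω : Type*} [MeasurableSpace Ω] (μ : Measure Ω)
    [IsProbabilityMeasure μ] (Z f : Ω → ℝ) (hZ : Measurable Z) (hf : Measurable f)
    (h : IndepFun f Z μ) (z : ℝ) (hz : μ (Z ⁻¹' {z}) ≠ 0) :
    ∫ ω, f ω ∂(μ[|Z ⁻¹' {z}]) = ∫ ω, f ω ∂μ := by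
  have hs : MeasurableSet (Z ⁻¹' {z}) := hZ (measurableSet_singleton z)
  have hmap : (μ[|Z ⁻¹' {z}]).map f = μ.map f := by
    ext t ht
    rw [Measure.map_apply hf ht, Measure.map_apply hf ht, cond_apply hs, Set.inter_comm,
      h.measure_inter_preimage_eq_mul _ _ ht (measurableSet_singleton z), mul_comm (μ _) (μ _),
      ← mul_assoc, ENNReal.inv_mul_cancel hz (measure_ne_top _ _), one_mul]
  have h1 := integral_map (μ := μ[|Z ⁻¹' {z}]) (f := fun x : ℝ => x) hf.aemeasurable
    measurable_id.aestronglyMeasurable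
  have h2 := integral_map (μ := μ) (f := fun x : ℝ => x) hf.aemeasurable
    measurable_id.aestronglyMeasurable
  rw [← h1, ← h2, hmap]

theorem stmt_7
    (μ : Measure Ω) [IsProbabilityMeasure μ]
    (Z : Ω → ℝ) (D1 : Bool → Ω → ℝ) (D2 : Bool → Bool → Ω → ℝ)
    (Yp : Bool → Bool → Bool → Ω → ℝ)
    (hZmeas : Measurable Z)
    (hD1meas : ∀ b, Measurable (D1 b))
    (hD2meas : ∀ b b', Measurable (D2 b b'))
    (hYmeas : ∀ z d1 d2, Measurable (Yp z d1 d2))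
    (hYint : ∀ z d1 d2, Integrable (Yp z d1 d2) μ)
    (hZ01 : ∀ ω, Z ω = 0 ∨ Z ω = 1)
    (hZpos : 0 < μ (Z ⁻¹' {1})) (hZlt : μ (Z ⁻¹' {1}) < 1)
    (hD101 : ∀ b ω, D1 b ω = 0 ∨ D1 b ω = 1)
    (hD201 : ∀ b b' ω, D2 b b' ω = 0 ∨ D2 b b' ω = 1)
    (hindep : IndepFun
      (fun ω => ((fun b => D1 b ω), (fun b b' => D2 b b' ω), (fun z d1 d2 => Yp z d1 d2 ω))) Z μ)
    (hrel1 : 0 < dE μ Z (obsD1 Z D1))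
    (hrel2 : 0 < dE μ Z (obsD2 Z D1 D2))
    (hrelAnd : 0 < dE μ Z (obsDand Z D1 D2))
    (hrelOr : 0 < dE μ Z (obsDor Z D1 D2))
    (hmono1 : ∀ᵐ ω ∂μ, D1 false ω ≤ D1 true ω)
    (hmono2 : ∀ᵐ ω ∂μ,
      D2 false true ω * D1 false ω + D2 false false ω * (1 - D1 false ω) ≤
        D2 true true ω * D1 true ω + D2 true false ω * (1 - D1 true ω))
    (hexcl : ∀ d1 d2, ∀ᵐ ω ∂μ, Yp true d1 d2 ω = Yp false d1 d2 ω)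
    (hdexcl : ∀ d1, ∀ᵐ ω ∂μ, D2 true d1 ω = D2 false d1 ω) :
    dE μ Z (obsD2 Z D1 D2) = (μ (CCev D1 D2)).toReal := by
  have hz0 : μ (Z ⁻¹' {0}) ≠ 0 := by
    intro h0
    have hu : Z ⁻¹' {1} ∪ Z ⁻¹' {0} = Set.univ := by
      ext ω
      rcases hZ01 ω with h | h <;> simp [h]
    have h1 : μ Set.univ ≤ μ (Z ⁻¹' {1}) + μ (Z ⁻¹' {0}) := hu ▸ measure_union_le _ _
    rw [h0, add_zero, measure_univ] at h1
    exact absurd hZlt (not_lt.mpr h1)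
  have hm11 := hD1meas true
  have hm10 := hD1meas false
  have hm2 := hD2meas
  let A : Bool → Ω → ℝ := fun z ω => D2 z true ω * D1 z ω + D2 z false ω * (1 - D1 z ω)
  have hAm : ∀ z, Measurable (A z) := fun z =>
    ((hD2meas z true).mul (hD1meas z)).add
      ((hD2meas z false).mul (measurable_const.sub (hD1meas z)))
  have hAi : ∀ z, IndepFun (A z) Z μ := by
    intro z
    have hg : Measurable (fun p : (Bool → ℝ) × (Bool → Bool → ℝ) × (Bool → Bool → Bool → ℝ) =>
        p.2.1 z true * p.1 z + p.2.1 z false * (1 - p.1 z)) := by fun_prop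
    exact hindep.comp hg measurable_id
  have hA01 : ∀ z ω, A z ω = 0 ∨ A z ω = 1 := by
    intro z ω
    rcases hD101 z ω with h | h <;> simp [A, h, hD201]
  have hAint : ∀ z, Integrable (A z) μ := by
    intro z
    refine Integrable.of_bound (hAm z).aestronglyMeasurable 1 (Filter.Eventually.of_forall ?_)
    intro ω
    rcases hA01 z ω with h | h <;> simp [h]
  have hsm : ∀ z : ℝ, MeasurableSet (Z ⁻¹' {z}) := fun z => hZmeas (measurableSet_singleton z)
  have e1 : ∫ ω, obsD2 Z D1 D2 ω ∂(μ[|Z ⁻¹' {1}]) = ∫ ω, A true ω ∂μ := by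
    rw [← integral_cond_of_indep μ Z (A true) hZmeas (hAm _) (hAi _) 1 hZpos.ne']
    refine integral_congr_ae ?_
    filter_upwards [ae_cond_mem (hsm 1)] with ω hω
    have : Z ω = 1 := hω
    simp [A, obsD2, obsD1, this]
  have e0 : ∫ ω, obsD2 Z D1 D2 ω ∂(μ[|Z ⁻¹' {0}]) = ∫ ω, A false ω ∂μ := by
    rw [← integral_cond_of_indep μ Z (A false) hZmeas (hAm _) (hAi _) 0 hz0]
    refine integral_congr_ae ?_
    filter_upwards [ae_cond_mem (hsm 0)] with ω hω
    have : Z ω = 0 := hω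
    simp [A, obsD2, obsD1, this]
  have hCC : MeasurableSet (CCev D1 D2) :=
    (measurableSet_eq_fun (hm11.sub hm10) measurable_const).inter
      (measurableSet_eq_fun ((hD2meas true true).sub (hD2meas false false)) measurable_const)
  unfold dE
  rw [e1, e0, ← integral_sub (hAint _) (hAint _), ← Measure.real_def, ← integral_indicator_one hCC]
  refine integral_congr_ae ?_
  filter_upwards [hmono1, hmono2, hdexcl true, hdexcl false] with ω h1 h2 h3 h4
  simp only [A, Set.indicator_apply, CCev, Set.mem_ofPred_eq, Pi.one_apply]
  rw [h3, h4] at h2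
  rw [h3, h4]
  rcases hD101 true ω with a | a <;> rcases hD101 false ω with b | b <;>
    rcases hD201 false true ω with c | c <;> rcases hD201 false false ω with d | d <;>
    rw [a, b] at h1 <;> rw [a, b, c, d] at h2 <;> rw [a, b, c, d] <;> first | (norm_num; done) | (norm_num at h1; done) | (norm_num at h2; done)
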